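/- (Minimax lower bound for sparse mean estimation, Theorem 2 lower bound.) There is a universal constant c > 0 such that the following holds. Let s, p, m be positive integers with 2s ≤ p. For θ ∈ ℝ^p let P_θ^m denote the law of m i.i.d. samples from the product Gaussian ⊗_{j=1}^p N(θ_j, 1) on ℝ^p. Then for every measurable estimator T : (ℝ^p)^m → ℝ^p, sup over s-sparse θ ∈ ℝ^p of E_{P_θ^m}[‖T − θ‖₂²] ≥ c · s · log(p/s) / m. -/

import Mathlib

open MeasureTheory ProbabilityTheory
open scoped ENNReal

open scoped NNReal

/-! Split `s ⌊p/s⌋` coordinates into `s` blocks of size `k = ⌊p/s⌋` and put a spike of height `a`,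
`exp (m a²) = √k`, at a uniformly chosen position of each block. An estimate whose squared error on
a block is less than `a² / 2` determines the position of the spike there. Conditionally on the other
blocks, the `k` possible laws of the sample have likelihood ratios of second moment `exp (m a²)`
with respect to the law without a spike in this block, and by Cauchy–Schwarz such hypotheses are
told apart with average probability at most `√(exp (m a²) / k) = k ^ (-1/4) ≤ 7/8`. So every block
contributes at least `a² / 16` to the average risk, and `a² = log k / (2 m)`. -/

section ChiSquare

/-- The second moment of the likelihood ratio `dν/dμ` under `μ`, which for probability measures
`ν ≪ μ` is `1 + χ²(ν ‖ μ)`. A part of `ν` singular to `μ` is not seen, so the value is meaningful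
only for `ν ≪ μ`. -/
noncomputable def chiSqMoment {Ω : Type*} [MeasurableSpace Ω] (ν μ : Measure Ω) : ℝ≥0∞ :=
  ∫⁻ x, ν.rnDeriv μ x ^ 2 ∂μ

variable {Ω : Type*} [MeasurableSpace Ω]

theorem chiSqMoment_withDensity (μ : Measure Ω) [SigmaFinite μ] {f : Ω → ℝ≥0∞}
    (hf : Measurable f) : chiSqMoment (μ.withDensity f) μ = ∫⁻ x, f x ^ 2 ∂μ :=
  lintegral_congr_ae <| (μ.rnDeriv_withDensity hf).fun_comp (· ^ 2)

theorem sq_measure_le_chiSqMoment_mul {ν μ : Measure Ω} [ν.HaveLebesgueDecomposition μ]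
    [SFinite μ] (hνμ : ν ≪ μ) (A : Set Ω) : ν A ^ 2 ≤ chiSqMoment ν μ * μ A := by
  have cauchy_schwarz : ν A ≤ (∫⁻ x in A, ν.rnDeriv μ x ^ 2 ∂μ) ^ (1 / 2 : ℝ) *
      μ A ^ (1 / 2 : ℝ) := by
    simpa [Measure.setLIntegral_rnDeriv hνμ] using
      ENNReal.lintegral_mul_le_Lp_mul_Lq (μ.restrict A) Real.HolderConjugate.two_two
        (ν.measurable_rnDeriv μ).aemeasurable (aemeasurable_const (b := 1))
  have sq_rpow_half (a : ℝ≥0∞) : (a ^ (1 / 2 : ℝ)) ^ 2 = a := by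
    rw [← ENNReal.rpow_mul_natCast]; norm_num
  calc ν A ^ 2
      ≤ ((∫⁻ x in A, ν.rnDeriv μ x ^ 2 ∂μ) ^ (1 / 2 : ℝ) * μ A ^ (1 / 2 : ℝ)) ^ 2 := by gcongr
    _ = (∫⁻ x in A, ν.rnDeriv μ x ^ 2 ∂μ) * μ A := by
        rw [mul_pow, sq_rpow_half, sq_rpow_half]
    _ ≤ chiSqMoment ν μ * μ A := by
        gcongr
        exact setLIntegral_le_lintegral A _

theorem sq_measureReal_le_mul_of_chiSqMoment_le {ν μ : Measure Ω} [IsFiniteMeasure ν]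
    [IsFiniteMeasure μ] (hνμ : ν ≪ μ) {C : ℝ≥0} (hC : chiSqMoment ν μ ≤ C) (A : Set Ω) :
    ν.real A ^ 2 ≤ C * μ.real A := by
  have h : ν A ^ 2 ≤ C * μ A := (sq_measure_le_chiSqMoment_mul hνμ A).trans (by gcongr)
  simpa [Measure.real] using ENNReal.toReal_mono (by finiteness) h

theorem sq_sum_measureReal_le_of_chiSqMoment_le {κ : Type*} [Fintype κ] {P : κ → Measure Ω}
    [∀ i, IsFiniteMeasure (P i)] {μ : Measure Ω} [IsProbabilityMeasure μ] (hP : ∀ i, P i ≪ μ)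
    {C : ℝ≥0} (hC : ∀ i, chiSqMoment (P i) μ ≤ C) {A : κ → Set Ω}
    (hA : ∀ i, MeasurableSet (A i)) (hdisj : Pairwise (Function.onFun Disjoint A)) :
    (∑ i, (P i).real (A i)) ^ 2 ≤ Fintype.card κ * C :=
  calc (∑ i, (P i).real (A i)) ^ 2
      ≤ Fintype.card κ * ∑ i, (P i).real (A i) ^ 2 := sq_sum_le_card_mul_sum_sq
    _ ≤ Fintype.card κ * ∑ i, C * μ.real (A i) := by
        gcongr with i
        exact sq_measureReal_le_mul_of_chiSqMoment_le (hP i) (hC i) (A i)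
    _ = Fintype.card κ * (C * μ.real (⋃ i, A i)) := by
        rw [← Finset.mul_sum, measureReal_iUnion_fintype hdisj hA]
    _ ≤ Fintype.card κ * C := by
        gcongr
        exact mul_le_of_le_one_right C.2 measureReal_le_one

end ChiSquare

section Pi

variable {ι : Type*} [Fintype ι] {E : ι → Type*} [∀ i, MeasurableSpace (E i)]
  (μ : ∀ i, Measure (E i)) [∀ i, IsProbabilityMeasure (μ i)]

theorem lintegral_pi_prod_eq_prod_lintegral {f : ∀ i, E i → ℝ≥0∞} (hf : ∀ i, Measurable (f i)) :
    ∫⁻ x, ∏ i, f i (x i) ∂Measure.pi μ = ∏ i, ∫⁻ x, f i x ∂μ i := by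
  rw [lintegral_prod_eq_prod_lintegral_of_indepFun Finset.univ (fun i (x : ∀ i, E i) => f i (x i))
    (iIndepFun_pi fun i => (hf i).aemeasurable) fun i => (hf i).comp (measurable_pi_apply i)]
  exact Finset.prod_congr rfl fun i _ => (measurePreserving_eval μ i).lintegral_comp (hf i)

theorem pi_withDensity {f : ∀ i, E i → ℝ≥0∞} (hf : ∀ i, Measurable (f i))
    [∀ i, SigmaFinite ((μ i).withDensity (f i))] :
    Measure.pi (fun i => (μ i).withDensity (f i)) =
      (Measure.pi μ).withDensity fun x => ∏ i, f i (x i) := by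
  refine Measure.pi_eq fun s hs => ?_
  have indicator_prod (x : ∀ i, E i) : (Set.univ.pi s).indicator (fun x => ∏ i, f i (x i)) x =
      ∏ i, (s i).indicator (f i) (x i) := by
    by_cases hx : x ∈ Set.univ.pi s
    · rw [Set.indicator_of_mem hx]
      exact Finset.prod_congr rfl fun i _ => (Set.indicator_of_mem (hx i trivial) _).symm
    · obtain ⟨i, hi⟩ : ∃ i, x i ∉ s i := by simpa using hx
      rw [Set.indicator_of_notMem hx]
      exact (Finset.prod_eq_zero (Finset.mem_univ i) (Set.indicator_of_notMem hi _)).symm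
  rw [withDensity_apply _ (.univ_pi hs), ← lintegral_indicator (.univ_pi hs)]
  simp_rw [indicator_prod, withDensity_apply _ (hs _), ← lintegral_indicator (hs _)]
  exact lintegral_pi_prod_eq_prod_lintegral μ fun i => (hf i).indicator (hs i)

variable {μ} {ν : ∀ i, Measure (E i)} [∀ i, SigmaFinite (ν i)]

theorem pi_eq_withDensity_prod_rnDeriv (h : ∀ i, ν i ≪ μ i) :
    Measure.pi ν = (Measure.pi μ).withDensity fun x => ∏ i, (ν i).rnDeriv (μ i) (x i) := by
  have hν (i : ι) : (μ i).withDensity ((ν i).rnDeriv (μ i)) = ν i :=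
    Measure.withDensity_rnDeriv_eq _ _ (h i)
  have (i : ι) : SigmaFinite ((μ i).withDensity ((ν i).rnDeriv (μ i))) := hν i ▸ inferInstance
  rw [← pi_withDensity μ fun i => (ν i).measurable_rnDeriv (μ i)]
  simp only [hν]

theorem absolutelyContinuous_pi (h : ∀ i, ν i ≪ μ i) : Measure.pi ν ≪ Measure.pi μ :=
  pi_eq_withDensity_prod_rnDeriv h ▸ withDensity_absolutelyContinuous _ _

theorem chiSqMoment_pi (h : ∀ i, ν i ≪ μ i) :
    chiSqMoment (Measure.pi ν) (Measure.pi μ) = ∏ i, chiSqMoment (ν i) (μ i) := by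
  rw [pi_eq_withDensity_prod_rnDeriv h, chiSqMoment_withDensity _ (by fun_prop)]
  simp_rw [← Finset.prod_pow]
  exact lintegral_pi_prod_eq_prod_lintegral μ fun i =>
    ((ν i).measurable_rnDeriv (μ i)).pow_const 2

end Pi

section Gaussian

theorem gaussianReal_eq_withDensity_gaussianReal (a b : ℝ) {v : ℝ≥0} (hv : v ≠ 0) :
    gaussianReal a v = (gaussianReal b v).withDensity fun x =>
      ENNReal.ofReal (Real.exp ((a - b) / v * x - (a ^ 2 - b ^ 2) / (2 * v))) := by
  rw [gaussianReal_of_var_ne_zero b hv, gaussianReal_of_var_ne_zero a hv,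
    ← withDensity_mul _ (measurable_gaussianPDF b v) (by fun_prop)]
  congr 1
  ext x
  rw [Pi.mul_apply, gaussianPDF, gaussianPDF, ← ENNReal.ofReal_mul (gaussianPDFReal_nonneg _ _ _),
    gaussianPDFReal, gaussianPDFReal, mul_assoc (√_)⁻¹, ← Real.exp_add]
  congr 4
  field_simp
  ring

theorem chiSqMoment_gaussianReal (a b : ℝ) {v : ℝ≥0} (hv : v ≠ 0) :
    chiSqMoment (gaussianReal a v) (gaussianReal b v) =
      ENNReal.ofReal (Real.exp ((a - b) ^ 2 / v)) := by
  have sq_density (x : ℝ) :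
      ENNReal.ofReal (Real.exp ((a - b) / v * x - (a ^ 2 - b ^ 2) / (2 * v))) ^ 2 =
        ENNReal.ofReal
          (Real.exp (-(a ^ 2 - b ^ 2) / v) * Real.exp (2 * ((a - b) / v) * x)) := by
    rw [← ENNReal.ofReal_pow (Real.exp_nonneg _), ← Real.exp_nat_mul, ← Real.exp_add]
    congr 2
    push_cast
    field_simp
    ring
  have moment_generating : ∫ x, Real.exp (2 * ((a - b) / v) * x) ∂gaussianReal b v =
      Real.exp (b * (2 * ((a - b) / v)) + v * (2 * ((a - b) / v)) ^ 2 / 2) :=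
    congrFun mgf_id_gaussianReal (2 * ((a - b) / v))
  rw [gaussianReal_eq_withDensity_gaussianReal a b hv, chiSqMoment_withDensity _ (by fun_prop)]
  simp_rw [sq_density]
  rw [← ofReal_integral_eq_lintegral_ofReal
    ((integrable_exp_mul_gaussianReal (2 * ((a - b) / v))).const_mul _)
    (Filter.Eventually.of_forall fun x => by positivity), integral_const_mul, moment_generating,
    ← Real.exp_add]
  congr 2
  field_simp
  ring

theorem gaussianReal_absolutelyContinuous_gaussianReal (a b : ℝ) {v w : ℝ≥0} (hv : v ≠ 0)
    (hw : w ≠ 0) : gaussianReal a v ≪ gaussianReal b w :=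
  (gaussianReal_absolutelyContinuous a hv).trans (gaussianReal_absolutelyContinuous' b hw)

/-- The law of independent samples, indexed by `τ`, from the Gaussian measure on `ι → ℝ` with mean
`θ` and identity covariance. -/
noncomputable abbrev gaussianSample (τ : Type*) {ι : Type*} [Fintype τ] [Fintype ι] (θ : ι → ℝ) :
    Measure (τ → ι → ℝ) :=
  Measure.pi fun _ : τ => Measure.pi fun j : ι => gaussianReal (θ j) 1

variable (τ : Type*) {ι : Type*} [Fintype τ] [Fintype ι] (θ η : ι → ℝ)

theorem gaussianSample_absolutelyContinuous : gaussianSample τ θ ≪ gaussianSample τ η :=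
  absolutelyContinuous_pi fun _ => absolutelyContinuous_pi fun j =>
    gaussianReal_absolutelyContinuous_gaussianReal (θ j) (η j) one_ne_zero one_ne_zero

theorem chiSqMoment_gaussianSample :
    chiSqMoment (gaussianSample τ θ) (gaussianSample τ η) =
      ENNReal.ofReal (Real.exp (Fintype.card τ * ∑ j, (θ j - η j) ^ 2)) := by
  have hac (j : ι) : gaussianReal (θ j) 1 ≪ gaussianReal (η j) 1 :=
    gaussianReal_absolutelyContinuous_gaussianReal (θ j) (η j) one_ne_zero one_ne_zero
  rw [chiSqMoment_pi fun _ => absolutelyContinuous_pi hac, chiSqMoment_pi hac]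
  simp only [chiSqMoment_gaussianReal _ _ one_ne_zero, NNReal.coe_one, div_one, Finset.prod_const,
    Finset.card_univ]
  rw [← ENNReal.ofReal_prod_of_nonneg fun _ _ => Real.exp_nonneg _, ← Real.exp_sum,
    ← ENNReal.ofReal_pow (Real.exp_nonneg _), ← Real.exp_nat_mul]

end Gaussian

section Averaging

/-- For independent uniform `f` and `i`, the pair of `Function.update f b i` and the overwritten
value `f b` has the law of `(f, i)`. -/
theorem sum_sum_update {ι κ M : Type*} [Fintype ι] [DecidableEq ι] [Fintype κ]
    [AddCommMonoid M] (b : ι) (g : (ι → κ) → κ → M) :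
    ∑ f : ι → κ, ∑ i, g (Function.update f b i) i = Fintype.card κ • ∑ f, g f (f b) := by
  have swap_involutive :
      Function.Involutive fun q : (ι → κ) × κ => (Function.update q.1 b q.2, q.1 b) :=
    fun q => by simp
  calc ∑ f : ι → κ, ∑ i, g (Function.update f b i) i
      = ∑ q : (ι → κ) × κ, g (Function.update q.1 b q.2) q.2 := by rw [Fintype.sum_prod_type]
    _ = ∑ q : (ι → κ) × κ, g q.1 (q.1 b) :=
        Fintype.sum_equiv swap_involutive.toPerm _ _ fun q => by simp [Function.Involutive.toPerm]
    _ = Fintype.card κ • ∑ f, g f (f b) := by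
        rw [Fintype.sum_prod_type, Finset.smul_sum]
        simp only [Finset.sum_const, Finset.card_univ]

theorem exists_card_mul_le_sum_of_forall_update {β κ R : Type*} [Fintype β] [DecidableEq β]
    [Fintype κ] [Nonempty κ] [Field R] [LinearOrder R] [IsStrictOrderedRing R] {c : R}
    {q : β → (β → κ) → κ → R}
    (h : ∀ b f, Fintype.card κ * c ≤ ∑ i, q b (Function.update f b i) i) :
    ∃ f, Fintype.card β * c ≤ ∑ b, q b f (f b) := by
  have block_average (b : β) : ∑ _f : β → κ, c ≤ ∑ f, q b f (f b) := by
    have hsum := Finset.sum_le_sum fun f (_ : f ∈ Finset.univ) => h b f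
    rw [sum_sum_update b (q b), ← Finset.mul_sum, nsmul_eq_mul] at hsum
    exact le_of_mul_le_mul_left hsum (by exact_mod_cast Fintype.card_pos)
  have average : ∑ _f : β → κ, Fintype.card β * c ≤ ∑ f, ∑ b, q b f (f b) := by
    rw [Finset.sum_comm]
    calc ∑ _f : β → κ, Fintype.card β * c = ∑ _b : β, ∑ _f : β → κ, c := by
          simp only [Finset.sum_const, nsmul_eq_mul, Finset.card_univ]
          ring
      _ ≤ ∑ b, ∑ f, q b f (f b) := Finset.sum_le_sum fun b _ => block_average b
  obtain ⟨f, -, hf⟩ := Finset.exists_le_of_sum_le Finset.univ_nonempty average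
  exact ⟨f, hf⟩

theorem ofReal_mul_sum_measureReal_le_lintegral_sum {Ω β : Type*} [MeasurableSpace Ω] [Fintype β]
    {μ : Measure Ω} [IsFiniteMeasure μ] {L : β → Ω → ℝ} (hL : ∀ b, Measurable (L b))
    (hL_nonneg : ∀ b x, 0 ≤ L b x) {r : ℝ} (hr : 0 ≤ r) :
    ENNReal.ofReal (r * ∑ b, μ.real {x | r ≤ L b x}) ≤
      ∫⁻ x, ENNReal.ofReal (∑ b, L b x) ∂μ :=
  calc ENNReal.ofReal (r * ∑ b, μ.real {x | r ≤ L b x})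
      = ∑ b, ENNReal.ofReal r * μ {x | r ≤ L b x} := by
        rw [ENNReal.ofReal_mul hr, ENNReal.ofReal_sum_of_nonneg fun _ _ => measureReal_nonneg,
          Finset.mul_sum]
        exact Finset.sum_congr rfl fun b _ => by rw [ofReal_measureReal]
    _ ≤ ∑ b, ∫⁻ x, ENNReal.ofReal (L b x) ∂μ := by
        gcongr with b
        simpa only [ENNReal.ofReal_le_ofReal_iff (hL_nonneg b _)] using
          mul_meas_ge_le_lintegral (μ := μ) (hL b).ennreal_ofReal (ENNReal.ofReal r)
    _ = ∫⁻ x, ENNReal.ofReal (∑ b, L b x) ∂μ := by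
        rw [← lintegral_finsetSum _ fun b _ => (hL b).ennreal_ofReal]
        exact lintegral_congr fun x =>
          (ENNReal.ofReal_sum_of_nonneg fun b _ => hL_nonneg b x).symm

end Averaging

section BlockLoss

variable {β κ ι : Type*} [Fintype κ] [DecidableEq κ] (e : β × κ ↪ ι) (a : ℝ) (b : β)

/-- The squared error of the estimate `t` on the block `b` when the spike of this block is at the
position `i`. -/
def blockLoss (i : κ) (t : ι → ℝ) : ℝ :=
  ∑ l, (t (e (b, l)) - (Pi.single i a : κ → ℝ) l) ^ 2

theorem measurable_blockLoss (i : κ) : Measurable (blockLoss e a b i) := by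
  unfold blockLoss
  fun_prop

/-- Spikes at different positions are at Euclidean distance `√2 |a|`, so the open balls of half
that radius around them are disjoint. -/
theorem pairwise_disjoint_blockLoss_lt :
    Pairwise (Function.onFun Disjoint fun i => {t | blockLoss e a b i t < a ^ 2 / 2}) := by
  intro i j hij
  refine Set.disjoint_left.2 fun t hi hj => ?_
  have pair_le (u : κ → ℝ) : u i ^ 2 + u j ^ 2 ≤ ∑ l, u l ^ 2 := by
    rw [← Finset.sum_pair hij (f := fun l => u l ^ 2)]
    exact Finset.sum_le_univ_sum_of_nonneg fun _ => sq_nonneg _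
  have hi' := (pair_le _).trans_lt hi
  have hj' := (pair_le _).trans_lt hj
  simp only [Pi.single_eq_same, Pi.single_eq_of_ne hij, Pi.single_eq_of_ne hij.symm] at hi' hj'
  nlinarith [sq_nonneg (2 * t (e (b, i)) - a), sq_nonneg (2 * t (e (b, j)) - a)]

end BlockLoss

section Spikes

variable {β κ ι : Type*} [Fintype β] [DecidableEq ι]

/-- The vector with one spike of height `a` in every block `b`, at the position `f b` of the block,
where `e (b, i)` is the `i`-th coordinate of the block `b`. -/
def spikeVector (e : β × κ ↪ ι) (a : ℝ) (f : β → κ) : ι → ℝ :=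
  ∑ b, Pi.single (e (b, f b)) a

theorem card_support_spikeVector_le [Fintype ι] (e : β × κ ↪ ι) (a : ℝ) (f : β → κ) :
    (Finset.univ.filter fun j => spikeVector e a f j ≠ 0).card ≤ Fintype.card β := by
  refine le_trans (Finset.card_le_card (t := Finset.univ.image fun b => e (b, f b)) fun j hj => ?_)
    Finset.card_image_le
  rw [Finset.mem_filter, spikeVector, Finset.sum_apply] at hj
  obtain ⟨b, hb, hne⟩ := Finset.exists_ne_zero_of_sum_ne_zero hj.2
  refine Finset.mem_image.2 ⟨b, hb, ?_⟩
  by_contra h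
  exact hne (by rw [Pi.single_eq_of_ne' h])

theorem spikeVector_apply_embedding [DecidableEq κ] (e : β × κ ↪ ι) (a : ℝ) (f : β → κ) (b : β)
    (i : κ) : spikeVector e a f (e (b, i)) = (Pi.single (f b) a : κ → ℝ) i := by
  classical
  simp [spikeVector, Pi.single_apply, e.injective.eq_iff, ite_and]

theorem spikeVector_update [DecidableEq β] (e : β × κ ↪ ι) (a : ℝ) (f : β → κ) (b : β) (i : κ) :
    spikeVector e a (Function.update f b i) =
      ∑ c ∈ Finset.univ.erase b, Pi.single (e (c, f c)) a + Pi.single (e (b, i)) a := by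
  rw [spikeVector, ← Finset.sum_erase_add _ _ (Finset.mem_univ b), Function.update_self]
  congr 1
  exact Finset.sum_congr rfl fun c hc => by
    rw [Function.update_of_ne (Finset.ne_of_mem_erase hc)]

theorem sum_blockLoss_le [Fintype κ] [DecidableEq κ] [Fintype ι] (e : β × κ ↪ ι) (a : ℝ)
    (f : β → κ) (t : ι → ℝ) :
    ∑ b, blockLoss e a b (f b) t ≤ ∑ j, (t j - spikeVector e a f j) ^ 2 := by
  simp_rw [blockLoss, ← spikeVector_apply_embedding e]
  rw [← Fintype.sum_prod_type' fun b i => (t (e (b, i)) - spikeVector e a f (e (b, i))) ^ 2,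
    ← Finset.sum_map Finset.univ e fun j => (t j - spikeVector e a f j) ^ 2]
  exact Finset.sum_le_univ_sum_of_nonneg fun _ => sq_nonneg _

variable [Fintype κ] {Ω : Type*} [MeasurableSpace Ω] {P : (ι → ℝ) → Measure Ω}
  [∀ θ, IsProbabilityMeasure (P θ)] {a δ : ℝ} {C : ℝ≥0} {T : Ω → ι → ℝ}

/-- The laws of the spike vectors that differ only on the block `b` are all compared with the law
of the vector with no spike on `b`. -/
theorem card_mul_le_sum_measureReal_blockLoss_ge [DecidableEq β] [DecidableEq κ] (e : β × κ ↪ ι)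
    (hP : ∀ η j, P (η + Pi.single j a) ≪ P η)
    (hC : ∀ η j, chiSqMoment (P (η + Pi.single j a)) (P η) ≤ C) (hδ : 0 ≤ δ)
    (hCδ : C ≤ Fintype.card κ * δ ^ 2) (hT : Measurable T) (b : β) (f : β → κ) :
    Fintype.card κ * (1 - δ) ≤ ∑ i, (P (spikeVector e a (Function.update f b i))).real
      {x | a ^ 2 / 2 ≤ blockLoss e a b i (T x)} := by
  have measurableSet_success (i : κ) : MeasurableSet {x | blockLoss e a b i (T x) < a ^ 2 / 2} :=
    measurableSet_lt ((measurable_blockLoss e a b i).comp hT) measurable_const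
  have sq_success_le := sq_sum_measureReal_le_of_chiSqMoment_le
    (fun i => spikeVector_update e a f b i ▸ hP _ _)
    (fun i => spikeVector_update e a f b i ▸ hC _ _) measurableSet_success
    fun i j hij => (pairwise_disjoint_blockLoss_lt e a b hij).preimage T
  have success_le : ∑ i, (P (spikeVector e a (Function.update f b i))).real
      {x | blockLoss e a b i (T x) < a ^ 2 / 2} ≤ Fintype.card κ * δ := by
    refine le_of_sq_le_sq (sq_success_le.trans ?_) (by positivity)
    rw [mul_pow, sq (Fintype.card κ : ℝ), mul_assoc]
    gcongr
  simp_rw [← not_lt, ← Set.compl_ofPred, probReal_compl_eq_one_sub (measurableSet_success _)]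
  rw [Finset.sum_sub_distrib, Finset.sum_const, Finset.card_univ, nsmul_one]
  linarith

theorem exists_spikeVector_risk_ge [Nonempty κ] [Fintype ι] (e : β × κ ↪ ι)
    (hP : ∀ η j, P (η + Pi.single j a) ≪ P η)
    (hC : ∀ η j, chiSqMoment (P (η + Pi.single j a)) (P η) ≤ C) (hδ : 0 ≤ δ)
    (hCδ : C ≤ Fintype.card κ * δ ^ 2) (hT : Measurable T) :
    ∃ f : β → κ, ENNReal.ofReal (a ^ 2 / 2 * (Fintype.card β * (1 - δ))) ≤
      ∫⁻ x, ENNReal.ofReal (∑ j, (T x j - spikeVector e a f j) ^ 2) ∂P (spikeVector e a f) := by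
  classical
  obtain ⟨f, hf⟩ := exists_card_mul_le_sum_of_forall_update
    (q := fun b f i => (P (spikeVector e a f)).real {x | a ^ 2 / 2 ≤ blockLoss e a b i (T x)})
    (card_mul_le_sum_measureReal_blockLoss_ge e hP hC hδ hCδ hT)
  refine ⟨f, ?_⟩
  calc ENNReal.ofReal (a ^ 2 / 2 * (Fintype.card β * (1 - δ)))
      ≤ ENNReal.ofReal (a ^ 2 / 2 * ∑ b, (P (spikeVector e a f)).real
          {x | a ^ 2 / 2 ≤ blockLoss e a b (f b) (T x)}) := by gcongr
    _ ≤ ∫⁻ x, ENNReal.ofReal (∑ b, blockLoss e a b (f b) (T x)) ∂P (spikeVector e a f) :=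
        ofReal_mul_sum_measureReal_le_lintegral_sum
          (fun b => (measurable_blockLoss e a b (f b)).comp hT)
          (fun b x => Finset.sum_nonneg fun _ _ => sq_nonneg _) (by positivity)
    _ ≤ _ := lintegral_mono fun x => ENNReal.ofReal_le_ofReal (sum_blockLoss_le e a f (T x))

end Spikes

theorem sqrt_le_mul_seven_eighths_sq {x : ℝ} (hx : 2 ≤ x) : √x ≤ x * (7 / 8) ^ 2 := by
  rw [Real.sqrt_le_left (by positivity)]
  nlinarith

theorem exists_sparse_gaussianSample_risk_ge {τ β κ ι : Type*} [Fintype τ] [Nonempty τ]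
    [Fintype β] [Fintype κ] [Fintype ι] (e : β × κ ↪ ι) (hκ : 2 ≤ Fintype.card κ)
    {T : (τ → ι → ℝ) → ι → ℝ} (hT : Measurable T) :
    ∃ θ : ι → ℝ, (Finset.univ.filter fun j => θ j ≠ 0).card ≤ Fintype.card β ∧
      ENNReal.ofReal (Fintype.card β * Real.log (Fintype.card κ) / (32 * Fintype.card τ)) ≤
        ∫⁻ x, ENNReal.ofReal (∑ j, (T x j - θ j) ^ 2) ∂gaussianSample τ θ := by
  classical
  have : Nonempty κ := Fintype.card_pos_iff.1 (by omega)
  have hκ' : (2 : ℝ) ≤ Fintype.card κ := by exact_mod_cast hκ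
  set a := √(Real.log (Fintype.card κ) / (2 * Fintype.card τ))
  have sq_a : a ^ 2 = Real.log (Fintype.card κ) / (2 * Fintype.card τ) :=
    Real.sq_sqrt (div_nonneg (Real.log_nonneg (by linarith)) (by positivity))
  have exp_a : Real.exp (Fintype.card τ * a ^ 2) = √(Fintype.card κ) := by
    rw [sq_a, show Fintype.card τ * (Real.log (Fintype.card κ) / (2 * Fintype.card τ)) =
      Real.log (Fintype.card κ) / 2 by field_simp, Real.exp_half, Real.exp_log (by linarith)]
  have chiSq_le (η : ι → ℝ) (j : ι) : chiSqMoment (gaussianSample τ (η + Pi.single j a))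
      (gaussianSample τ η) ≤ (√(Fintype.card κ)).toNNReal := by
    rw [chiSqMoment_gaussianSample]
    simp [Pi.single_apply, ite_pow, exp_a, ENNReal.ofReal]
  obtain ⟨f, hf⟩ := exists_spikeVector_risk_ge e
    (fun η j => gaussianSample_absolutelyContinuous τ _ η) chiSq_le (δ := 7 / 8) (by norm_num)
    (by simpa using sqrt_le_mul_seven_eighths_sq hκ') hT
  refine ⟨spikeVector e a f, card_support_spikeVector_le e a f, le_of_eq_of_le ?_ hf⟩
  rw [sq_a]
  congr 1
  ring

theorem log_div_le_two_mul_log_natDiv {s p : ℕ} (hs : 0 < s) (hsp : 2 * s ≤ p) :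
    Real.log ((p : ℝ) / s) ≤ 2 * Real.log (p / s : ℕ) := by
  have two_le : (2 : ℝ) ≤ (p / s : ℕ) := by
    exact_mod_cast (Nat.le_div_iff_mul_le hs).2 hsp
  have ratio_lt : (p : ℝ) / s < (p / s : ℕ) + 1 := by
    simpa only [Nat.floor_div_eq_div] using Nat.lt_floor_add_one ((p : ℝ) / s)
  have ratio_pos : (0 : ℝ) < p / s :=
    div_pos (by exact_mod_cast (by omega : 0 < p)) (by exact_mod_cast hs)
  calc Real.log ((p : ℝ) / s) ≤ Real.log ((p / s : ℕ) ^ 2) :=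
        Real.log_le_log ratio_pos (by nlinarith)
    _ = 2 * Real.log (p / s : ℕ) := by rw [Real.log_pow, Nat.cast_ofNat]

/-- minimax lower bound for sparse Gaussian mean estimation: there is a
universal constant `c > 0` such that for all positive integers `s, p, m` with `2s ≤ p` and
every measurable estimator `T : (ℝ^p)^m → ℝ^p`, the supremum over `s`-sparse `θ ∈ ℝ^p` of the
risk `E_{P_θ^m}[‖T − θ‖₂²]` is at least `c · s · log(p/s) / m`, where `P_θ^m` is the law of
`m` i.i.d. samples from `⊗_j N(θ_j, 1)`. -/
theorem sparse_mean_minimax_lower_bound :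
    ∃ c > (0 : ℝ), ∀ s p m : ℕ, 0 < s → 0 < p → 0 < m → 2 * s ≤ p →
      ∀ T : (Fin m → Fin p → ℝ) → Fin p → ℝ, Measurable T →
        ENNReal.ofReal (c * s * Real.log ((p : ℝ) / s) / m) ≤
          ⨆ θ ∈ {θ : Fin p → ℝ | (Finset.univ.filter fun j => θ j ≠ 0).card ≤ s},
            ∫⁻ x, ENNReal.ofReal (∑ j, (T x j - θ j) ^ 2)
              ∂(Measure.pi fun _ : Fin m => Measure.pi fun j : Fin p => gaussianReal (θ j) 1) := by
  refine ⟨1 / 64, by norm_num, fun s p m hs _ hm hsp T hT => ?_⟩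
  have : NeZero m := ⟨hm.ne'⟩
  obtain ⟨e⟩ : Nonempty (Fin s × Fin (p / s) ↪ Fin p) :=
    Function.Embedding.nonempty_of_card_le (by simpa using Nat.mul_div_le p s)
  obtain ⟨θ, hθ, hrisk⟩ := exists_sparse_gaussianSample_risk_ge e
    (by simpa using (Nat.le_div_iff_mul_le hs).2 hsp) hT
  simp only [Fintype.card_fin] at hθ hrisk
  refine le_trans (ENNReal.ofReal_le_ofReal ?_) (hrisk.trans (le_iSup₂_of_le θ hθ le_rfl))
  calc 1 / 64 * s * Real.log ((p : ℝ) / s) / m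
      ≤ 1 / 64 * s * (2 * Real.log (p / s : ℕ)) / m := by
        gcongr
        exact log_div_le_two_mul_log_natDiv hs hsp
    _ = s * Real.log (p / s : ℕ) / (32 * m) := by ring
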